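/- Three-dimensional interpolation estimate (Case 3 of the last Duhamel term): fix 4 ≤ r < 6. For any t > 0, any B > 0, any measurable interval I ⊆ [max(t/2, t−B), t], and any measurable u : I × ℝ³ → ℂ, one has ‖ ∫_I e^{i(t−s)Δ} (|u|^{4/3}u)(s) ds ‖_{L^r_x(ℝ³)} ≤ C t^{−(r+6)/(2r)} B^{(6−r)/(2r)} ‖u‖_{L^∞_s L²_x(I×ℝ³)}^{2(3r−10)/(3(r−2))} ( sup_{s ∈ I} s^{3(1/2−1/r)} ‖u(s)‖_{L^r_x(ℝ³)} )^{(r+6)/(3(r−2))}, with C depending only on r. -/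

import Mathlib

open MeasureTheory Set
open scoped ENNReal Real

noncomputable section

/-- The free Schrödinger propagator `e^{itΔ}` acting on functions on a `d`-dimensional space:
for `t ≠ 0`, `(e^{itΔ}f)(x) = (4πit)^{-d/2} ∫ e^{i|x-y|²/(4t)} f(y) dy`, and `e^{i0Δ}f = f`. -/
def schrod {E : Type*} [NormedAddCommGroup E] [MeasureSpace E] (d : ℕ) (t : ℝ) (f : E → ℂ) :
    E → ℂ :=
  if t = 0 then f
  else fun x =>
    (4 * (Real.pi : ℂ) * Complex.I * (t : ℂ)) ^ (-(d : ℂ) / 2) *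
      ∫ y, Complex.exp (Complex.I * ((‖x - y‖ ^ 2 : ℝ) : ℂ) / (4 * (t : ℂ))) * f y

/-- Mixed Lebesgue norm `‖u‖_{L^p_t L^q_x (I × space)}`. -/
def mixedNorm {α : Type*} [MeasurableSpace α] (ν : Measure α) (I : Set ℝ) (p q : ℝ≥0∞)
    (u : ℝ → α → ℂ) : ℝ≥0∞ :=
  if p = ∞ then essSup (fun t => eLpNorm (u t) q ν) (volume.restrict I)
  else (∫⁻ t in I, eLpNorm (u t) q ν ^ p.toReal) ^ (1 / p.toReal)

/-- Lorentz quasinorm `p^{1/q} ‖ λ · ν({g > λ})^{1/p} ‖_{L^q((0,∞), dλ/λ)}`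
for an `ℝ≥0∞`-valued function `g`. -/
def lorentzNorm {α : Type*} [MeasurableSpace α] (ν : Measure α) (p q : ℝ≥0∞)
    (g : α → ℝ≥0∞) : ℝ≥0∞ :=
  if q = ∞ then
    ⨆ l ∈ Set.Ioi (0 : ℝ), ENNReal.ofReal l * ν {x | ENNReal.ofReal l < g x} ^ p⁻¹.toReal
  else
    (p * ∫⁻ l in Set.Ioi (0 : ℝ),
        (ENNReal.ofReal l * ν {x | ENNReal.ofReal l < g x} ^ p⁻¹.toReal) ^ q.toReal /
          ENNReal.ofReal l) ^ q⁻¹.toReal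

/-- Lorentz quasinorm `‖f‖_{L^{p,q}}` of a scalar function. -/
def lorentzNormC {α : Type*} [MeasurableSpace α] (ν : Measure α) (p q : ℝ≥0∞)
    (f : α → ℂ) : ℝ≥0∞ :=
  lorentzNorm ν p q fun x => (‖f x‖₊ : ℝ≥0∞)

/-- Lorentz-in-time mixed norm `‖u‖_{L^{p,q}_t L^r_x (I × space)}`. -/
def lorentzMixedNorm {α : Type*} [MeasurableSpace α] (ν : Measure α) (I : Set ℝ)
    (p q r : ℝ≥0∞) (u : ℝ → α → ℂ) : ℝ≥0∞ :=
  lorentzNorm (volume.restrict I) p q fun t => eLpNorm (u t) r ν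

/-- The nonlinearity `|f|^a f`. -/
def nonlin {E : Type*} (a : ℝ) (f : E → ℂ) : E → ℂ := fun x => ((‖f x‖ ^ a : ℝ) : ℂ) * f x

/-!
The kernel of `e^{itΔ}` factors as `e^{i|x|²/(4t)} e^{-i⟨x,y⟩/(2t)} e^{i|y|²/(4t)}`, so `e^{itΔ}` is
a rescaled Fourier transform between two unimodular multiplications. The Hausdorff–Young
inequality, obtained by Marcinkiewicz truncation between `L¹ → L^∞` and `L² → L²`, then yields decay
`|t|^{-δ}` from `L^{r'}` to `L^r` with `δ = d(1/2 - 1/r)`. By Hölder, `|u|^a u` is controlled in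
`L^{r'}` by powers `α` and `β` of the `L²` and `L^r` norms of `u`. Minkowski's inequality moves the
`L^r` norm inside the time integral; since `δ < 1`, integrating `|t - s|^{-δ}` over a set in
`[t - B, t]` costs at most a constant times `B^{1-δ}`, and `s ≥ t/2` turns the time weight of `u`
into `t^{-δβ}`.
-/

section LpNorms

variable {X : Type*} [MeasurableSpace X] {μ : Measure X}

theorem eLpNorm_ofReal_eq_lintegral {F : Type*} [NormedAddCommGroup F] {p : ℝ} (hp : 0 < p)
    (f : X → F) :
    eLpNorm f (ENNReal.ofReal p) μ = (∫⁻ x, ‖f x‖ₑ ^ p ∂μ) ^ (1 / p) := by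
  rw [eLpNorm_eq_lintegral_rpow_enorm_toReal (ENNReal.ofReal_pos.2 hp).ne' ENNReal.ofReal_ne_top,
    ENNReal.toReal_ofReal hp.le]

end LpNorms

section PowerIntegrals

theorem setLIntegral_Ioc_ofReal_rpow {c L : ℝ} (hc : -1 < c) (hL : 0 ≤ L) :
    ∫⁻ t in Ioc 0 L, ENNReal.ofReal (t ^ c) = ENNReal.ofReal (L ^ (c + 1) / (c + 1)) := by
  rw [← ofReal_integral_eq_lintegral_ofReal]
  · rw [← intervalIntegral.integral_of_le hL, integral_rpow (Or.inl hc),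
      Real.zero_rpow (by linarith), sub_zero]
  · exact (intervalIntegrable_iff_integrableOn_Ioc_of_le hL).1
      (intervalIntegral.intervalIntegrable_rpow' hc)
  · filter_upwards [self_mem_ae_restrict measurableSet_Ioc] with t ht
    exact Real.rpow_nonneg ht.1.le _

theorem setLIntegral_ofReal_rpow_of_mul_le {c : ℝ} (hc : -1 < c) {M b : ℝ≥0∞} (hM : M ≠ ∞)
    (hb : b ≠ 0) (hb' : b ≠ ∞) :
    ∫⁻ t in Ioi (0 : ℝ) ∩ {t | ENNReal.ofReal t * b ≤ M}, ENNReal.ofReal (t ^ c) =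
      ENNReal.ofReal (1 / (c + 1)) * (M / b) ^ (c + 1) := by
  have hMb : M / b ≠ ∞ := ENNReal.div_ne_top hM hb
  have hset : Ioi (0 : ℝ) ∩ {t | ENNReal.ofReal t * b ≤ M} = Ioc 0 (M / b).toReal := by
    ext t
    simp only [mem_inter_iff, mem_Ioi, mem_ofPred_eq, mem_Ioc,
      ← ENNReal.le_div_iff_mul_le (.inl hb) (.inl hb'), ENNReal.ofReal_le_iff_le_toReal hMb]
  rw [hset, setLIntegral_Ioc_ofReal_rpow hc ENNReal.toReal_nonneg, div_eq_mul_one_div, mul_comm,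
    ENNReal.ofReal_mul (by rw [one_div_nonneg]; linarith),
    ← ENNReal.ofReal_rpow_of_nonneg ENNReal.toReal_nonneg (by linarith), ENNReal.ofReal_toReal hMb]

theorem setLIntegral_ofReal_abs_sub_rpow_le {c t B : ℝ} (hc : -1 < c) (hB : 0 ≤ B) {I : Set ℝ}
    (hI : I ⊆ Icc (t - B) t) :
    ∫⁻ s in I, ENNReal.ofReal (|t - s| ^ c) ≤ ENNReal.ofReal (B ^ (c + 1) / (c + 1)) := by
  have hsub : I ⊆ (fun s => t - s) ⁻¹' Icc 0 B := fun s hs =>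
    ⟨sub_nonneg.2 (hI hs).2, sub_le_comm.1 (hI hs).1⟩
  calc ∫⁻ s in I, ENNReal.ofReal (|t - s| ^ c)
      ≤ ∫⁻ s in (fun s => t - s) ⁻¹' Icc 0 B, ENNReal.ofReal (|t - s| ^ c) :=
        lintegral_mono_set hsub
    _ = ∫⁻ x in Icc 0 B, ENNReal.ofReal (|x| ^ c) :=
        (Measure.measurePreserving_sub_left volume t).setLIntegral_comp_preimage
          measurableSet_Icc (f := fun x => ENNReal.ofReal (|x| ^ c)) (by fun_prop)
    _ = ∫⁻ x in Ioc 0 B, ENNReal.ofReal (x ^ c) := by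
        rw [← Measure.restrict_congr_set Ioc_ae_eq_Icc]
        exact setLIntegral_congr_fun measurableSet_Ioc fun x hx => by
          simp only [abs_of_pos hx.1]
    _ = ENNReal.ofReal (B ^ (c + 1) / (c + 1)) := setLIntegral_Ioc_ofReal_rpow hc hB

theorem le_ofReal_rpow_neg_mul_iSup {c t₀ s : ℝ} (hc : 0 ≤ c) (ht₀ : 0 < t₀) {I : Set ℝ}
    (hs : s ∈ I) (hts : t₀ ≤ s) (φ : ℝ → ℝ≥0∞) :
    φ s ≤ ENNReal.ofReal (t₀ ^ (-c)) * ⨆ s ∈ I, ENNReal.ofReal (s ^ c) * φ s := by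
  have hs0 : 0 < s := ht₀.trans_le hts
  calc φ s = ENNReal.ofReal (s ^ (-c)) * (ENNReal.ofReal (s ^ c) * φ s) := by
        rw [← mul_assoc, ← ENNReal.ofReal_mul (by positivity), ← Real.rpow_add hs0,
          neg_add_cancel, Real.rpow_zero, ENNReal.ofReal_one, one_mul]
    _ ≤ _ := mul_le_mul'
        (ENNReal.ofReal_le_ofReal (Real.rpow_le_rpow_of_nonpos ht₀ hts (neg_nonpos.2 hc)))
        (le_iSup₂ (f := fun s (_ : s ∈ I) => ENNReal.ofReal (s ^ c) * φ s) s hs)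

end PowerIntegrals

section Marcinkiewicz

variable {X Y F G : Type*} [MeasurableSpace X] [MeasurableSpace Y]
  [NormedAddCommGroup F] [NormedAddCommGroup G]

/-- A sublinear operator, defined on integrable functions, which is a contraction both from `L¹` to
`L^∞` and from `L²` to `L²`; the `L^∞` bound is required at every point. -/
structure IsEndpointContraction (T : (X → F) → Y → G) (μ : Measure X) (ν : Measure Y) :
    Prop where
  aestronglyMeasurable {f : X → F} (hf : Integrable f μ) : AEStronglyMeasurable (T f) ν
  enorm_add_le {f g : X → F} (hf : Integrable f μ) (hg : Integrable g μ) (y : Y) :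
    ‖T (f + g) y‖ₑ ≤ ‖T f y‖ₑ + ‖T g y‖ₑ
  enorm_le_lintegral {f : X → F} (hf : Integrable f μ) (y : Y) : ‖T f y‖ₑ ≤ ∫⁻ x, ‖f x‖ₑ ∂μ
  eLpNorm_two_le {f : X → F} (hf : Integrable f μ) : eLpNorm (T f) 2 ν ≤ eLpNorm f 2 μ

/-- The constant of the interpolated bound `L^p → L^q`, `1 / p + 1 / q = 1`, in
`IsEndpointContraction.eLpNorm_le`. -/
def marcinkiewiczConst (q : ℝ) : ℝ := (q * (4 * (2 ^ (q - 2) / (q - 2)))) ^ (1 / q)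

theorem marcinkiewiczConst_pos {q : ℝ} (hq : 2 < q) : 0 < marcinkiewiczConst q := by
  have : 0 < q - 2 := by linarith
  unfold marcinkiewiczConst
  positivity

variable {μ : Measure X} {ν : Measure Y} {T : (X → F) → Y → G} {f : X → F} {p q : ℝ}

/-- The set on which a function `g` is kept when it is truncated in order to estimate the level
set of height `l`; the cutoff is chosen so that the discarded part has integral at most `l / 2`. -/
def truncationSet (μ : Measure X) (p : ℝ) (g : X → ℝ≥0∞) (l : ℝ≥0∞) : Set X :=
  {x | l * g x ^ (p - 1) ≤ 2 * ∫⁻ x, g x ^ p ∂μ}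

theorem measurableSet_truncationSet {g : X → ℝ≥0∞} (hg : Measurable g) (l : ℝ≥0∞) :
    MeasurableSet (truncationSet μ p g l) :=
  measurableSet_le (by fun_prop) measurable_const

theorem setLIntegral_compl_truncationSet_le {g : X → ℝ≥0∞} (hg : Measurable g) (hp : 1 ≤ p)
    (hg0 : ∫⁻ x, g x ^ p ∂μ ≠ 0) (hgt : ∫⁻ x, g x ^ p ∂μ ≠ ∞) (l : ℝ≥0∞) :
    ∫⁻ x in (truncationSet μ p g l)ᶜ, g x ∂μ ≤ l / 2 := by
  set A := ∫⁻ x, g x ^ p ∂μ with hA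
  suffices h : 2 * A * ∫⁻ x in (truncationSet μ p g l)ᶜ, g x ∂μ ≤ 2 * A * (l / 2) from
    (ENNReal.mul_le_mul_iff_right (by simpa using hg0) (ENNReal.mul_ne_top (by simp) hgt)).1 h
  calc 2 * A * ∫⁻ x in (truncationSet μ p g l)ᶜ, g x ∂μ
      = ∫⁻ x in (truncationSet μ p g l)ᶜ, 2 * A * g x ∂μ := by
        rw [lintegral_const_mul _ hg]
    _ ≤ ∫⁻ x in (truncationSet μ p g l)ᶜ, l * g x ^ p ∂μ := by
        refine setLIntegral_mono' (measurableSet_truncationSet hg l).compl fun x hx => ?_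
        have hpow : g x ^ p = g x ^ (p - 1) * g x := by
          simpa using ENNReal.rpow_add_of_nonneg (x := g x) (p - 1) 1 (by linarith) zero_le_one
        rw [hpow, ← mul_assoc]
        exact mul_le_mul_left (lt_of_not_ge fun hle => hx hle).le _
    _ ≤ l * A := by
        rw [hA, ← lintegral_const_mul _ (by fun_prop)]
        exact setLIntegral_le_lintegral _ _
    _ = 2 * A * (l / 2) := by
        rw [mul_comm 2 A, mul_assoc, ENNReal.mul_div_cancel (by simp) (by simp), mul_comm]

theorem setLIntegral_truncated_rpow_mul_sq (hpq : p.HolderConjugate q) (hq : 2 < q) {M b : ℝ≥0∞}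
    (hM : M ≠ ∞) (hb : b ≠ ∞) :
    ∫⁻ t in Ioi (0 : ℝ), {t : ℝ | ENNReal.ofReal t * b ^ (p - 1) ≤ M}.indicator
        (fun t => ENNReal.ofReal (t ^ (q - 3)) * b ^ 2) t =
      ENNReal.ofReal (1 / (q - 2)) * M ^ (q - 2) * b ^ p := by
  rcases eq_or_ne b 0 with rfl | hb0
  · simp [indicator, hpq.pos]
  have hq2 : 0 ≤ q - 2 := by linarith
  have hexp : -((p - 1) * (q - 2)) + 2 = p := by linarith [hpq.mul_eq_add]
  have hmeas : MeasurableSet {t : ℝ | ENNReal.ofReal t * b ^ (p - 1) ≤ M} :=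
    measurableSet_le (by fun_prop) measurable_const
  calc _ = (∫⁻ t in Ioi (0 : ℝ) ∩ {t | ENNReal.ofReal t * b ^ (p - 1) ≤ M},
            ENNReal.ofReal (t ^ (q - 3))) * b ^ 2 := by
        rw [setLIntegral_indicator hmeas, lintegral_mul_const _ (by fun_prop), inter_comm]
    _ = ENNReal.ofReal (1 / (q - 2)) * (M / b ^ (p - 1)) ^ (q - 2) * b ^ 2 := by
        rw [setLIntegral_ofReal_rpow_of_mul_le (by linarith) hM
          (ENNReal.rpow_pos (pos_iff_ne_zero.2 hb0) hb).ne' (by simp [hb, hb0]),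
          show q - 3 + 1 = q - 2 by ring]
    _ = ENNReal.ofReal (1 / (q - 2)) * M ^ (q - 2) * b ^ p := by
        rw [ENNReal.div_rpow_of_nonneg _ _ hq2, ← ENNReal.rpow_mul,
          div_eq_mul_inv (M ^ (q - 2)), ← ENNReal.rpow_neg, mul_assoc, mul_assoc, mul_assoc,
          ← ENNReal.rpow_two, ← ENNReal.rpow_add _ _ hb0 hb, hexp]

theorem lintegral_rpow_mul_setLIntegral_truncationSet [SFinite μ] {g : X → ℝ≥0∞}
    (hg : Measurable g) (hgt : ∀ x, g x ≠ ∞) (hpq : p.HolderConjugate q) (hq : 2 < q)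
    (hA : ∫⁻ x, g x ^ p ∂μ ≠ ∞) :
    ∫⁻ t in Ioi (0 : ℝ),
        ENNReal.ofReal (t ^ (q - 3)) * ∫⁻ x in truncationSet μ p g (ENNReal.ofReal t), g x ^ 2 ∂μ =
      ENNReal.ofReal (2 ^ (q - 2) / (q - 2)) * (∫⁻ x, g x ^ p ∂μ) ^ (q - 1) := by
  have hq2 : 0 < q - 2 := by linarith
  set A := ∫⁻ x, g x ^ p ∂μ
  let S : Set (ℝ × X) := {z | ENNReal.ofReal z.1 * g z.2 ^ (p - 1) ≤ 2 * A}
  have hS : MeasurableSet S := measurableSet_le (by fun_prop) measurable_const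
  let h : ℝ × X → ℝ≥0∞ := S.indicator fun z => ENNReal.ofReal (z.1 ^ (q - 3)) * g z.2 ^ 2
  have hh : Measurable h := Measurable.indicator (by fun_prop) hS
  calc _ = ∫⁻ t in Ioi (0 : ℝ), ∫⁻ x, h (t, x) ∂μ := by
        refine lintegral_congr fun t => ?_
        rw [← lintegral_const_mul _ (by fun_prop),
          ← lintegral_indicator (measurableSet_truncationSet hg _)]
        rfl
    _ = ∫⁻ x, (∫⁻ t in Ioi (0 : ℝ), h (t, x)) ∂μ :=
        lintegral_lintegral_swap (f := fun t x => h (t, x)) hh.aemeasurable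
    _ = ∫⁻ x, ENNReal.ofReal (1 / (q - 2)) * (2 * A) ^ (q - 2) * g x ^ p ∂μ :=
        lintegral_congr fun x =>
          setLIntegral_truncated_rpow_mul_sq hpq hq (ENNReal.mul_ne_top (by simp) hA) (hgt x)
    _ = ENNReal.ofReal (1 / (q - 2)) * (2 * A) ^ (q - 2) * A :=
        lintegral_const_mul _ (by fun_prop)
    _ = ENNReal.ofReal (2 ^ (q - 2) / (q - 2)) * A ^ (q - 1) := by
        have hpow : A ^ (q - 1) = A ^ (q - 2) * A := by
          rw [show q - 1 = q - 2 + 1 by ring, ENNReal.rpow_add_of_nonneg _ _ hq2.le zero_le_one,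
            ENNReal.rpow_one]
        rw [ENNReal.mul_rpow_of_nonneg _ _ hq2.le, hpow, div_eq_mul_one_div (2 ^ (q - 2) : ℝ),
          ENNReal.ofReal_mul (by positivity), ← ENNReal.ofReal_rpow_of_pos two_pos,
          ENNReal.ofReal_ofNat]
        ring

theorem IsEndpointContraction.meas_lt_enorm_le (hT : IsEndpointContraction T μ ν)
    (hf : Integrable f μ) (hfm : StronglyMeasurable f) (hp : 1 ≤ p)
    (hf0 : ∫⁻ x, ‖f x‖ₑ ^ p ∂μ ≠ 0) (hft : ∫⁻ x, ‖f x‖ₑ ^ p ∂μ ≠ ∞) {l : ℝ≥0∞} (hl : l ≠ 0)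
    (hlt : l ≠ ∞) :
    ν {y | l < ‖T f y‖ₑ} ≤
      4 * l⁻¹ ^ 2 * ∫⁻ x in truncationSet μ p (fun x => ‖f x‖ₑ) l, ‖f x‖ₑ ^ 2 ∂μ := by
  set S := truncationSet μ p (fun x => ‖f x‖ₑ) l
  have hS : MeasurableSet S := measurableSet_truncationSet hfm.enorm l
  have hlow : Integrable (S.indicator f) μ := hf.indicator hS
  have hhigh : Integrable (Sᶜ.indicator f) μ := hf.indicator hS.compl
  have hhigh_le (y : Y) : ‖T (Sᶜ.indicator f) y‖ₑ ≤ l / 2 := by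
    refine (hT.enorm_le_lintegral hhigh y).trans ?_
    simp only [enorm_indicator_eq_indicator_enorm, lintegral_indicator hS.compl]
    exact setLIntegral_compl_truncationSet_le hfm.enorm hp hf0 hft l
  have hsub : {y | l < ‖T f y‖ₑ} ⊆ {y | l / 2 ≤ ‖T (S.indicator f) y‖ₑ} := by
    intro y (hy : l < ‖T f y‖ₑ)
    rw [← S.indicator_self_add_compl f] at hy
    have hsum := (hT.enorm_add_le hlow hhigh y).trans (add_le_add_right (hhigh_le y) _)
    by_contra hsmall
    refine absurd (hy.trans_le hsum) (not_lt.2 ?_)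
    exact (add_le_add_left (lt_of_not_ge hsmall).le _).trans_eq (ENNReal.add_halves l)
  have hsq : eLpNorm (S.indicator f) 2 μ ^ 2 = ∫⁻ x in S, ‖f x‖ₑ ^ 2 ∂μ := by
    rw [eLpNorm_indicator_eq_eLpNorm_restrict hS]
    simpa using eLpNorm_nnreal_pow_eq_lintegral (f := f) (μ := μ.restrict S) (p := 2) two_ne_zero
  calc ν {y | l < ‖T f y‖ₑ} ≤ ν {y | l / 2 ≤ ‖T (S.indicator f) y‖ₑ} := measure_mono hsub
    _ ≤ (l / 2)⁻¹ ^ 2 * eLpNorm (T (S.indicator f)) 2 ν ^ 2 := by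
        simpa using meas_ge_le_mul_pow_eLpNorm_enorm ν two_ne_zero (by simp)
          (hT.aestronglyMeasurable hlow) (ε := l / 2) (by simp [hl])
          (by simp [hlt, ENNReal.div_eq_top])
    _ ≤ (l / 2)⁻¹ ^ 2 * eLpNorm (S.indicator f) 2 μ ^ 2 := by
        gcongr
        exact hT.eLpNorm_two_le hlow
    _ = 4 * l⁻¹ ^ 2 * ∫⁻ x in S, ‖f x‖ₑ ^ 2 ∂μ := by
        rw [hsq, ENNReal.inv_div (by simp) (by simp), ENNReal.div_eq_inv_mul, mul_pow,
          mul_comm (l⁻¹ ^ 2)]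
        norm_num

theorem IsEndpointContraction.lintegral_enorm_rpow_le [SFinite μ]
    (hT : IsEndpointContraction T μ ν) (hf : Integrable f μ) (hfm : StronglyMeasurable f)
    (hpq : p.HolderConjugate q) (hq : 2 < q)
    (hf0 : ∫⁻ x, ‖f x‖ₑ ^ p ∂μ ≠ 0) (hft : ∫⁻ x, ‖f x‖ₑ ^ p ∂μ ≠ ∞) :
    ∫⁻ y, ‖T f y‖ₑ ^ q ∂ν ≤ ENNReal.ofReal (q * (4 * (2 ^ (q - 2) / (q - 2)))) *
      (∫⁻ x, ‖f x‖ₑ ^ p ∂μ) ^ (q - 1) := by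
  have hq0 : 0 < q := by linarith
  have hlevel {t : ℝ} (ht : 0 < t) : ν {y | t < ‖T f y‖} * ENNReal.ofReal (t ^ (q - 1)) ≤
      4 * (ENNReal.ofReal (t ^ (q - 3)) *
        ∫⁻ x in truncationSet μ p (fun x => ‖f x‖ₑ) (ENNReal.ofReal t), ‖f x‖ₑ ^ 2 ∂μ) := by
    have hset : {y | t < ‖T f y‖} = {y | ENNReal.ofReal t < ‖T f y‖ₑ} := by
      ext y
      simp only [mem_ofPred_eq, ← ofReal_norm, ENNReal.ofReal_lt_ofReal_iff_of_nonneg ht.le]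
    have hpow : (ENNReal.ofReal t)⁻¹ ^ 2 * ENNReal.ofReal (t ^ (q - 1)) =
        ENNReal.ofReal (t ^ (q - 3)) := by
      rw [← ENNReal.ofReal_inv_of_pos ht, ← ENNReal.ofReal_pow (by positivity),
        ← ENNReal.ofReal_mul (by positivity), inv_pow, ← Real.rpow_natCast,
        ← Real.rpow_neg ht.le, ← Real.rpow_add ht]
      congr 2
      push_cast
      ring
    rw [hset, ← hpow]
    refine (mul_le_mul_left (hT.meas_lt_enorm_le hf hfm hpq.lt.le hf0 hft
      (ENNReal.ofReal_pos.2 ht).ne' ENNReal.ofReal_ne_top) _).trans_eq (by ring)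
  calc ∫⁻ y, ‖T f y‖ₑ ^ q ∂ν = ∫⁻ y, ENNReal.ofReal (‖T f y‖ ^ q) ∂ν := by
        simp only [← ofReal_norm, ENNReal.ofReal_rpow_of_nonneg (norm_nonneg _) hq0.le]
    _ = ENNReal.ofReal q *
          ∫⁻ t in Ioi (0 : ℝ), ν {y | t < ‖T f y‖} * ENNReal.ofReal (t ^ (q - 1)) :=
        lintegral_rpow_eq_lintegral_meas_lt_mul ν (.of_forall fun y => norm_nonneg _)
          (hT.aestronglyMeasurable hf).norm.aemeasurable hq0
    _ ≤ ENNReal.ofReal q * ∫⁻ t in Ioi (0 : ℝ), 4 * (ENNReal.ofReal (t ^ (q - 3)) *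
          ∫⁻ x in truncationSet μ p (fun x => ‖f x‖ₑ) (ENNReal.ofReal t), ‖f x‖ₑ ^ 2 ∂μ) := by
        gcongr _ * ?_
        exact setLIntegral_mono' measurableSet_Ioi fun t (ht : 0 < t) => hlevel ht
    _ = ENNReal.ofReal (q * (4 * (2 ^ (q - 2) / (q - 2)))) *
          (∫⁻ x, ‖f x‖ₑ ^ p ∂μ) ^ (q - 1) := by
        rw [lintegral_const_mul' _ _ (by simp), lintegral_rpow_mul_setLIntegral_truncationSet
          hfm.enorm (by simp) hpq hq hft, ENNReal.ofReal_mul hq0.le, ENNReal.ofReal_mul (by simp),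
          ENNReal.ofReal_ofNat, ← mul_assoc, ← mul_assoc, ← mul_assoc]

theorem IsEndpointContraction.eLpNorm_le [SFinite μ] (hT : IsEndpointContraction T μ ν)
    (hf : Integrable f μ) (hfm : StronglyMeasurable f) (hpq : p.HolderConjugate q) (hq : 2 < q) :
    eLpNorm (T f) (ENNReal.ofReal q) ν ≤
      ENNReal.ofReal (marcinkiewiczConst q) * eLpNorm f (ENNReal.ofReal p) μ := by
  have : 0 < q - 2 := by linarith
  have hq0 : 0 < q := hpq.symm.pos
  rcases eq_or_ne (∫⁻ x, ‖f x‖ₑ ^ p ∂μ) 0 with hf0 | hf0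
  · have hf_ae : ∀ᵐ x ∂μ, ‖f x‖ₑ = 0 := by
      rw [lintegral_eq_zero_iff (hfm.enorm.pow_const p)] at hf0
      filter_upwards [hf0] with x hx
      simpa [hpq.pos, hpq.pos.not_gt] using hx
    have hTf : T f = 0 := funext fun y => by
      simpa [lintegral_congr_ae hf_ae] using hT.enorm_le_lintegral hf y
    simp [hTf]
  rw [eLpNorm_ofReal_eq_lintegral hq0, eLpNorm_ofReal_eq_lintegral hpq.pos]
  rcases eq_or_ne (∫⁻ x, ‖f x‖ₑ ^ p ∂μ) ∞ with hft | hft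
  · rw [hft, ENNReal.top_rpow_of_pos hpq.one_div_pos,
      ENNReal.mul_top (ENNReal.ofReal_pos.2 (marcinkiewiczConst_pos hq)).ne']
    exact le_top
  have hexp : (q - 1) * (1 / q) = 1 / p := by
    have hinv := hpq.inv_add_inv_eq_one
    rw [one_div, one_div, sub_mul, mul_inv_cancel₀ hq0.ne']
    linarith
  calc _ ≤ (ENNReal.ofReal (q * (4 * (2 ^ (q - 2) / (q - 2)))) *
        (∫⁻ x, ‖f x‖ₑ ^ p ∂μ) ^ (q - 1)) ^ (1 / q) :=
        ENNReal.rpow_le_rpow (hT.lintegral_enorm_rpow_le hf hfm hpq hq hf0 hft) (by positivity)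
    _ = _ := by
        rw [ENNReal.mul_rpow_of_nonneg _ _ (by positivity), ← ENNReal.rpow_mul, hexp,
          ENNReal.ofReal_rpow_of_pos (by positivity), marcinkiewiczConst]

end Marcinkiewicz

section Fourier

open Module
open scoped FourierTransform SchwartzMap

variable {V F : Type*} [NormedAddCommGroup V] [InnerProductSpace ℝ V] [FiniteDimensional ℝ V]
  [MeasurableSpace V] [BorelSpace V]

theorem continuous_fourier [NormedAddCommGroup F] [NormedSpace ℂ F] {f : V → F}
    (hf : Integrable f) : Continuous (𝓕 f) :=
  VectorFourier.fourierIntegral_continuous Real.continuous_fourierChar (L := innerₗ V)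
    continuous_inner hf

theorem fourier_add_of_integrable [NormedAddCommGroup F] [NormedSpace ℂ F] {f g : V → F}
    (hf : Integrable f) (hg : Integrable g) : 𝓕 (f + g) = 𝓕 f + 𝓕 g :=
  VectorFourier.fourierIntegral_add Real.continuous_fourierChar (L := innerₗ V)
    continuous_inner hf hg

theorem enorm_fourier_le_lintegral [NormedAddCommGroup F] [NormedSpace ℂ F] (f : V → F) (ξ : V) :
    ‖𝓕 f ξ‖ₑ ≤ ∫⁻ x, ‖f x‖ₑ := by
  rw [Real.fourier_eq]
  refine (enorm_integral_le_lintegral_enorm _).trans_eq (lintegral_congr fun x => ?_)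
  rw [enorm_eq_iff_norm_eq, Circle.norm_smul]

variable [NormedAddCommGroup F] [InnerProductSpace ℂ F] [CompleteSpace F]

theorem integral_fourier_smul_eq (φ : 𝓢(V, ℂ)) {f : V → F} (hf : Integrable f) :
    ∫ ξ, 𝓕 φ ξ • f ξ = ∫ x, φ x • 𝓕 f x := by
  have key := VectorFourier.integral_fourierIntegral_smul_eq_flip (L := innerₗ V) (μ := volume)
    (ν := volume) (f := φ) (g := f) Real.continuous_fourierChar continuous_inner φ.integrable hf
  rw [flip_innerₗ] at key
  rw [SchwartzMap.fourier_coe]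
  exact key

-- Both sides define the same tempered distribution.
theorem fourier_ae_eq_fourier_toLp {f : V → F} (hf : Integrable f) (hf2 : MemLp f 2) :
    𝓕 f =ᵐ[volume] (𝓕 (hf2.toLp f) : Lp F 2 (volume : Measure V)) := by
  refine ae_eq_of_integral_contDiff_smul_eq (continuous_fourier hf).locallyIntegrable
    ((Lp.memLp _).locallyIntegrable one_le_two) fun g hg hgc => ?_
  have hgC : ContDiff ℝ _ fun x => (g x : ℂ) := Complex.ofRealCLM.contDiff.comp hg
  have hgcC : HasCompactSupport fun x => (g x : ℂ) :=
    hgc.comp_left (g := Complex.ofReal) Complex.ofReal_zero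
  let φ : 𝓢(V, ℂ) := hgcC.toSchwartzMap hgC
  have hφ (x : V) (c : F) : φ x • c = g x • c := Complex.coe_smul (g x) c
  have hdistr := DFunLike.congr_fun (Lp.fourier_toTemperedDistribution_eq (hf2.toLp f)) φ
  simp only [TemperedDistribution.fourier_apply, Lp.toTemperedDistribution_apply] at hdistr
  calc ∫ x, g x • 𝓕 f x = ∫ x, φ x • 𝓕 f x := by simp only [hφ]
    _ = ∫ ξ, 𝓕 φ ξ • f ξ := (integral_fourier_smul_eq φ hf).symm
    _ = ∫ ξ, 𝓕 φ ξ • hf2.toLp f ξ :=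
      integral_congr_ae (hf2.coeFn_toLp.mono fun x hx => by simp only [hx])
    _ = ∫ x, φ x • (𝓕 (hf2.toLp f) : Lp F 2 (volume : Measure V)) x := hdistr
    _ = ∫ x, g x • (𝓕 (hf2.toLp f) : Lp F 2 (volume : Measure V)) x := by simp only [hφ]

theorem eLpNorm_fourier_two_le {f : V → F} (hf : Integrable f) :
    eLpNorm (𝓕 f) 2 ≤ eLpNorm f 2 := by
  by_cases hf2 : MemLp f 2
  · rw [eLpNorm_congr_ae (fourier_ae_eq_fourier_toLp hf hf2), ← eLpNorm_congr_ae hf2.coeFn_toLp,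
      ← Lp.enorm_def, ← Lp.enorm_def, enorm_le_iff_norm_le]
    exact (Lp.norm_fourier_eq _).le
  · exact le_top.trans_eq (not_lt_top_iff.1 fun h => hf2 ⟨hf.1, h⟩).symm

theorem isEndpointContraction_fourier :
    IsEndpointContraction (fun f : V → F => 𝓕 f) volume volume where
  aestronglyMeasurable hf := (continuous_fourier hf).aestronglyMeasurable
  enorm_add_le hf hg ξ := by
    rw [fourier_add_of_integrable hf hg]
    exact enorm_add_le _ _
  enorm_le_lintegral _ ξ := enorm_fourier_le_lintegral _ ξ
  eLpNorm_two_le hf := eLpNorm_fourier_two_le hf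

/-- **Hausdorff–Young inequality** for `1 < p < 2`, with a non-optimal constant. -/
theorem eLpNorm_fourier_le {f : V → F} (hf : Integrable f) {p q : ℝ} (hpq : p.HolderConjugate q)
    (hq : 2 < q) :
    eLpNorm (𝓕 f) (ENNReal.ofReal q) ≤
      ENNReal.ofReal (marcinkiewiczConst q) * eLpNorm f (ENNReal.ofReal p) := by
  obtain ⟨g, hgm, hfg⟩ := hf.1
  rw [funext (Real.fourier_congr_ae hfg), eLpNorm_congr_ae hfg]
  exact isEndpointContraction_fourier.eLpNorm_le (hf.congr hfg) hgm hpq hq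

end Fourier

section Minkowski

variable {X Y : Type*} [MeasurableSpace X] [MeasurableSpace Y] {μ : Measure X} {ν : Measure Y}
  {r : ℝ}

theorem rpow_lintegral_le_lintegral_weight_mul (hr : 1 ≤ r) {g w : Y → ℝ≥0∞} (hg : Measurable g)
    (hw : Measurable w) (hw_top : ∀ᵐ y ∂ν, w y ≠ ∞) (hgw : ∀ᵐ y ∂ν, w y = 0 → g y = 0) :
    (∫⁻ y, g y ∂ν) ^ r ≤ (∫⁻ y, w y ∂ν) ^ (r - 1) * ∫⁻ y, w y ^ (1 - r) * g y ^ r ∂ν := by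
  have hr0 : 0 < r := by linarith
  have : 0 ≤ r - 1 := by linarith
  have hfactor : ∀ᵐ y ∂ν, g y = w y ^ ((r - 1) / r) * (w y ^ (1 - r) * g y ^ r) ^ (1 / r) := by
    filter_upwards [hw_top, hgw] with y hy hgy
    rcases eq_or_ne (w y) 0 with hy0 | hy0
    · simp [hgy hy0, hr0]
    rw [ENNReal.mul_rpow_of_nonneg _ _ (by positivity), ← ENNReal.rpow_mul, ← ENNReal.rpow_mul,
      ← mul_assoc, ← ENNReal.rpow_add _ _ hy0 hy, mul_one_div_cancel hr0.ne',
      show (r - 1) / r + (1 - r) * (1 / r) = 0 by ring, ENNReal.rpow_zero, one_mul,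
      ENNReal.rpow_one]
  rw [lintegral_congr_ae hfactor]
  refine (ENNReal.rpow_le_rpow (ENNReal.lintegral_mul_norm_pow_le hw.aemeasurable (by fun_prop)
    (by positivity) (by positivity) (by field_simp; ring)) hr0.le).trans_eq ?_
  rw [ENNReal.mul_rpow_of_nonneg _ _ hr0.le, ← ENNReal.rpow_mul, ← ENNReal.rpow_mul,
    div_mul_cancel₀ _ hr0.ne', div_mul_cancel₀ _ hr0.ne', ENNReal.rpow_one]

theorem ae_ae_eq_zero_of_lintegral_rpow_eq_zero [SFinite μ] [SFinite ν] (hr : 0 < r)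
    {g : Y → X → ℝ≥0∞} (hg : Measurable (Function.uncurry g)) :
    ∀ᵐ x ∂μ, ∀ᵐ y ∂ν, ∫⁻ x, g y x ^ r ∂μ = 0 → g y x = 0 := by
  have hint : Measurable fun y => ∫⁻ x, g y x ^ r ∂μ := (hg.pow_const r).lintegral_prod_right'
  have hmeas : MeasurableSet {z : Y × X | ∫⁻ x, g z.1 x ^ r ∂μ = 0 → g z.1 z.2 = 0} :=
    .imp (measurableSet_eq_fun (hint.comp measurable_fst) measurable_const)
      (measurableSet_eq_fun hg measurable_const)
  refine (Measure.ae_ae_comm hmeas).1 (.of_forall fun y => ?_)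
  rcases eq_or_ne (∫⁻ x, g y x ^ r ∂μ) 0 with hy | hy
  · filter_upwards [(lintegral_eq_zero_iff (hg.of_uncurry_left.pow_const r)).1 hy] with x hx _
    simpa [hr, hr.not_gt] using hx
  · exact .of_forall fun x hy' => absurd hy' hy

/-- **Minkowski's integral inequality** for nonnegative functions. -/
theorem lintegral_rpow_lintegral_le [SFinite μ] [SFinite ν] (hr : 1 ≤ r) {g : Y → X → ℝ≥0∞}
    (hg : Measurable (Function.uncurry g)) :
    (∫⁻ x, (∫⁻ y, g y x ∂ν) ^ r ∂μ) ^ (1 / r) ≤ ∫⁻ y, (∫⁻ x, g y x ^ r ∂μ) ^ (1 / r) ∂ν := by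
  have hr0 : 0 < r := by linarith
  have hr1 : 0 ≤ r - 1 := by linarith
  set w : Y → ℝ≥0∞ := fun y => (∫⁻ x, g y x ^ r ∂μ) ^ (1 / r)
  have hw : Measurable w := (hg.pow_const r).lintegral_prod_right'.pow_const _
  have hw_pow (y : Y) : ∫⁻ x, g y x ^ r ∂μ = w y ^ r := by
    rw [← ENNReal.rpow_mul, one_div_mul_cancel hr0.ne', ENNReal.rpow_one]
  rcases eq_or_ne (∫⁻ y, w y ∂ν) ∞ with hW | hW
  · exact le_top.trans_eq hW.symm
  have hw_top : ∀ᵐ y ∂ν, w y ≠ ∞ := (ae_lt_top hw hW).mono fun y hy => hy.ne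
  have hgw : ∀ᵐ x ∂μ, ∀ᵐ y ∂ν, w y = 0 → g y x = 0 := by
    simpa [hw_pow, hr0, hr0.not_gt] using
      ae_ae_eq_zero_of_lintegral_rpow_eq_zero (μ := μ) (ν := ν) hr0 hg
  have hmeas : Measurable (Function.uncurry fun x y => w y ^ (1 - r) * g y x ^ r) :=
    ((hw.pow_const _).comp measurable_snd).mul ((hg.comp measurable_swap).pow_const r)
  rw [one_div, ENNReal.rpow_inv_le_iff hr0]
  calc ∫⁻ x, (∫⁻ y, g y x ∂ν) ^ r ∂μ
      ≤ ∫⁻ x, (∫⁻ y, w y ∂ν) ^ (r - 1) * ∫⁻ y, w y ^ (1 - r) * g y x ^ r ∂ν ∂μ :=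
        lintegral_mono_ae <| hgw.mono fun x hx =>
          rpow_lintegral_le_lintegral_weight_mul hr hg.of_uncurry_right hw hw_top hx
    _ = (∫⁻ y, w y ∂ν) ^ (r - 1) * ∫⁻ y, w y ^ (1 - r) * w y ^ r ∂ν := by
        rw [lintegral_const_mul (f := fun x => ∫⁻ y, w y ^ (1 - r) * g y x ^ r ∂ν) _
            hmeas.lintegral_prod_right',
          lintegral_lintegral_swap hmeas.aemeasurable]
        congr 2 with y
        rw [lintegral_const_mul _ (hg.of_uncurry_left.pow_const r), hw_pow]
    _ ≤ (∫⁻ y, w y ∂ν) ^ (r - 1) * ∫⁻ y, w y ∂ν := by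
        gcongr _ * ?_
        refine lintegral_mono_ae (hw_top.mono fun y hy => ?_)
        rcases eq_or_ne (w y) 0 with hy0 | hy0
        · simp [hy0, hr0]
        · rw [← ENNReal.rpow_add _ _ hy0 hy, sub_add_cancel, ENNReal.rpow_one]
    _ = (∫⁻ y, w y ∂ν) ^ r := by
        conv_rhs => rw [← sub_add_cancel r 1, ENNReal.rpow_add_of_nonneg _ _ hr1 zero_le_one,
          ENNReal.rpow_one]

theorem eLpNorm_integral_le_lintegral_eLpNorm [SFinite μ] [SFinite ν] {F : Type*}
    [NormedAddCommGroup F] [NormedSpace ℝ F] [MeasurableSpace F] [OpensMeasurableSpace F]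
    (hr : 1 ≤ r) {g : Y → X → F} (hg : Measurable (Function.uncurry g)) :
    eLpNorm (fun x => ∫ y, g y x ∂ν) (ENNReal.ofReal r) μ ≤
      ∫⁻ y, eLpNorm (g y) (ENNReal.ofReal r) μ ∂ν := by
  have hr0 : 0 < r := by linarith
  simp only [eLpNorm_ofReal_eq_lintegral hr0]
  refine le_trans ?_ (lintegral_rpow_lintegral_le hr hg.enorm)
  gcongr with x
  exact enorm_integral_le_lintegral_enorm _

end Minkowski

section Nonlinearity

variable {X : Type*} {a : ℝ}

theorem enorm_nonlin (ha : 0 < a + 1) (f : X → ℂ) (x : X) :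
    ‖nonlin a f x‖ₑ = ‖f x‖ₑ ^ (a + 1) := by
  rcases eq_or_ne (f x) 0 with hx | hx
  · simp [nonlin, hx, ha]
  rw [nonlin, enorm_mul, ENNReal.rpow_add _ _ (by simpa using hx) (by simp), ENNReal.rpow_one,
    ← ofReal_norm, Complex.norm_real, Real.norm_of_nonneg (by positivity),
    ← ENNReal.ofReal_rpow_of_pos (by simpa using hx), ofReal_norm]

variable [MeasurableSpace X]

theorem measurable_uncurry_nonlin {S : Type*} [MeasurableSpace S] {u : S → X → ℂ}
    (hu : Measurable (Function.uncurry u)) :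
    Measurable (Function.uncurry fun s => nonlin a (u s)) :=
  (Complex.measurable_ofReal.comp (hu.norm.pow_const a)).mul hu

theorem eLpNorm_nonlin_le {μ : Measure X} {f : X → ℂ} (hf : AEMeasurable f μ)
    {p p₀ p₁ α β : ℝ} (hp : 0 < p) (hp₀ : 0 < p₀) (hp₁ : 0 < p₁) (hα : 0 ≤ α) (hβ : 0 ≤ β)
    (hαβ : α + β = a + 1) (hexp : α / p₀ + β / p₁ = 1 / p) :
    eLpNorm (nonlin a f) (ENNReal.ofReal p) μ ≤
      eLpNorm f (ENNReal.ofReal p₀) μ ^ α * eLpNorm f (ENNReal.ofReal p₁) μ ^ β := by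
  have ha : 0 < a + 1 := by
    have : 0 < α / p₀ + β / p₁ := by rw [hexp]; positivity
    rw [← hαβ]
    by_contra! hle
    rw [show α = 0 by linarith, show β = 0 by linarith] at this
    simp at this
  have hsplit (x : X) : ‖nonlin a f x‖ₑ ^ p =
      (‖f x‖ₑ ^ p₀) ^ (α * p / p₀) * (‖f x‖ₑ ^ p₁) ^ (β * p / p₁) := by
    rw [enorm_nonlin ha, ← ENNReal.rpow_mul, ← ENNReal.rpow_mul, ← ENNReal.rpow_mul,
      mul_div_cancel₀ _ hp₀.ne', mul_div_cancel₀ _ hp₁.ne',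
      ← ENNReal.rpow_add_of_nonneg _ _ (by positivity) (by positivity), ← add_mul, hαβ]
  have hsum : α * p / p₀ + β * p / p₁ = 1 := by
    rw [mul_div_right_comm, mul_div_right_comm, ← add_mul, hexp, one_div_mul_cancel hp.ne']
  rw [eLpNorm_ofReal_eq_lintegral hp, eLpNorm_ofReal_eq_lintegral hp₀,
    eLpNorm_ofReal_eq_lintegral hp₁]
  simp only [hsplit]
  refine (ENNReal.rpow_le_rpow (ENNReal.lintegral_mul_norm_pow_le (by fun_prop) (by fun_prop)
    (by positivity) (by positivity) hsum) (by positivity)).trans_eq ?_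
  rw [ENNReal.mul_rpow_of_nonneg _ _ (by positivity)]
  simp only [← ENNReal.rpow_mul]
  congr 2 <;> field_simp

end Nonlinearity

section Propagator

open Module
open scoped FourierTransform RealInnerProductSpace

variable {E : Type*} [NormedAddCommGroup E]

/-- The quadratic phase `e^{i|x|²/(4t)}` in the kernel of the Schrödinger propagator. -/
def chirp (t : ℝ) (x : E) : ℂ := Complex.exp (Complex.I * ((‖x‖ ^ 2 : ℝ) : ℂ) / (4 * (t : ℂ)))

theorem enorm_chirp (t : ℝ) (x : E) : ‖chirp t x‖ₑ = 1 := by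
  have : Complex.I * ((‖x‖ ^ 2 : ℝ) : ℂ) / (4 * (t : ℂ)) =
      ((‖x‖ ^ 2 / (4 * t) : ℝ) : ℂ) * Complex.I := by push_cast; ring
  rw [chirp, this, ← ofReal_norm, Complex.norm_exp_ofReal_mul_I, ENNReal.ofReal_one]

theorem chirp_neg_mul_chirp (t : ℝ) (x : E) : chirp (-t) x * chirp t x = 1 := by
  rw [chirp, chirp, ← Complex.exp_add, ← Complex.exp_zero]
  congr 1
  push_cast
  ring

theorem eLpNorm_chirp_mul [MeasurableSpace E] {μ : Measure E} (t : ℝ) (f : E → ℂ) (p : ℝ≥0∞) :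
    eLpNorm (fun y => chirp t y * f y) p μ = eLpNorm f p μ :=
  eLpNorm_congr_enorm_ae (.of_forall fun y => by rw [enorm_mul, enorm_chirp, one_mul])

theorem measurable_chirp [MeasurableSpace E] [OpensMeasurableSpace E] (t : ℝ) :
    Measurable (chirp t : E → ℂ) := by
  unfold chirp
  fun_prop

theorem integrable_chirp_mul [MeasurableSpace E] [OpensMeasurableSpace E] {μ : Measure E}
    {f : E → ℂ} (hf : Integrable f μ) (t : ℝ) :
    Integrable (fun y => chirp t y * f y) μ :=
  ⟨(measurable_chirp t).aestronglyMeasurable.mul hf.1, by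
    simpa only [hasFiniteIntegral_iff_enorm, enorm_mul, enorm_chirp, one_mul] using hf.2⟩

theorem integrable_chirp_mul_iff [MeasurableSpace E] [OpensMeasurableSpace E] {μ : Measure E}
    {f : E → ℂ} {t : ℝ} :
    Integrable (fun y => chirp t y * f y) μ ↔ Integrable f μ := by
  refine ⟨fun h => ?_, fun h => integrable_chirp_mul h t⟩
  simpa only [← mul_assoc, chirp_neg_mul_chirp, one_mul] using integrable_chirp_mul h (-t)

variable [InnerProductSpace ℝ E]

theorem chirp_sub {t : ℝ} (ht : t ≠ 0) (x y : E) :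
    chirp t (x - y) =
      chirp t x * (𝐞 (-⟪y, (4 * π * t)⁻¹ • x⟫) * chirp t y) := by
  have htC : (t : ℂ) ≠ 0 := mod_cast ht
  have hπC : (π : ℂ) ≠ 0 := mod_cast Real.pi_ne_zero
  rw [chirp, chirp, chirp, Real.fourierChar_apply, ← Complex.exp_add, ← Complex.exp_add,
    norm_sub_sq_real, real_inner_smul_right, real_inner_comm]
  congr 1
  push_cast
  field_simp
  ring

variable [FiniteDimensional ℝ E] [MeasurableSpace E] [BorelSpace E]

theorem eLpNorm_comp_smul {F : Type*} [NormedAddCommGroup F] {g : E → F}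
    (hg : StronglyMeasurable g) {c : ℝ} (hc : c ≠ 0) {p : ℝ} (hp : 0 < p) :
    eLpNorm (fun x => g (c • x)) (ENNReal.ofReal p) =
      ENNReal.ofReal (|c|⁻¹ ^ (finrank ℝ E / p)) * eLpNorm g (ENNReal.ofReal p) := by
  have hmap := eLpNorm_map_measure (p := ENNReal.ofReal p) (f := fun x : E => c • x)
    (μ := volume) hg.aestronglyMeasurable (by fun_prop)
  rw [Function.comp_def] at hmap
  rw [← hmap, Measure.map_addHaar_smul _ hc, eLpNorm_smul_measure_of_ne_top ENNReal.ofReal_ne_top,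
    smul_eq_mul, abs_inv, abs_pow, ← inv_pow, ENNReal.toReal_div, ENNReal.toReal_one,
    ENNReal.toReal_ofReal hp.le, ENNReal.ofReal_rpow_of_pos (by positivity), ← Real.rpow_natCast,
    ← Real.rpow_mul (by positivity), mul_one_div]

variable {d : ℕ} {t : ℝ} {f : E → ℂ}

theorem schrod_apply_eq_fourier (ht : t ≠ 0) (x : E) :
    schrod d t f x = (4 * (π : ℂ) * Complex.I * (t : ℂ)) ^ (-(d : ℂ) / 2) *
      (chirp t x * 𝓕 (fun y => chirp t y * f y) ((4 * π * t)⁻¹ • x)) := by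
  rw [schrod, if_neg ht, Real.fourier_eq, ← integral_const_mul (chirp t x)]
  congr 1
  refine integral_congr_ae (.of_forall fun y => ?_)
  change chirp t (x - y) * f y = _
  simp only [chirp_sub ht, Circle.smul_def, smul_eq_mul, mul_assoc]

theorem enorm_schrod (ht : t ≠ 0) (x : E) :
    ‖schrod d t f x‖ₑ = ENNReal.ofReal ((4 * π * |t|) ^ (-(d / 2 : ℝ))) *
      ‖𝓕 (fun y => chirp t y * f y) ((4 * π * t)⁻¹ • x)‖ₑ := by
  have hexp : -(d : ℂ) / 2 = ((-(d / 2) : ℝ) : ℂ) := by push_cast; ring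
  have hprefactor : ‖(4 * (π : ℂ) * Complex.I * (t : ℂ)) ^ (-(d : ℂ) / 2)‖ =
      (4 * π * |t|) ^ (-(d / 2 : ℝ)) := by
    rw [hexp, Complex.norm_cpow_real]
    simp [abs_of_pos Real.pi_pos]
  rw [schrod_apply_eq_fourier ht, enorm_mul, enorm_mul, enorm_chirp, one_mul, ← hprefactor,
    ofReal_norm]

theorem schrod_eq_zero_of_not_integrable (ht : t ≠ 0) (hf : ¬ Integrable f) :
    schrod d t f = 0 := by
  funext x
  rw [schrod_apply_eq_fourier ht, Real.fourier_eq,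
    integral_undef (by rwa [Real.fourierIntegral_convergent_iff, integrable_chirp_mul_iff])]
  simp

/-- The exponent `d (1 / 2 - 1 / r)` of the time decay of `e^{itΔ}` into `L^r`. -/
def decayExponent (d : ℕ) (r : ℝ) : ℝ := d * (1 / 2 - 1 / r)

theorem decayExponent_nonneg (d : ℕ) {r : ℝ} (hr : 2 ≤ r) : 0 ≤ decayExponent d r :=
  mul_nonneg d.cast_nonneg (sub_nonneg.2 (one_div_le_one_div_of_le two_pos hr))

theorem eLpNorm_schrod_eq (hd : finrank ℝ E = d) (ht : t ≠ 0) (hf : Integrable f) {r : ℝ}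
    (hr : 0 < r) :
    eLpNorm (schrod d t f) (ENNReal.ofReal r) =
      ENNReal.ofReal ((4 * π * |t|) ^ (-decayExponent d r)) *
        eLpNorm (𝓕 fun y => chirp t y * f y) (ENNReal.ofReal r) := by
  have hscale : (4 * π * t)⁻¹ ≠ 0 := inv_ne_zero (mul_ne_zero (by positivity) ht)
  have hscale_pos : 0 < 4 * π * |t| := by positivity
  have habs : |(4 * π * t)⁻¹|⁻¹ = 4 * π * |t| := by
    rw [abs_inv, inv_inv, abs_mul, abs_of_pos (by positivity : 0 < 4 * π)]
  have hcont := continuous_fourier (integrable_chirp_mul hf t)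
  generalize hg : (𝓕 fun y => chirp t y * f y) = g at hcont ⊢
  have hnorm : eLpNorm (schrod d t f) (ENNReal.ofReal r) =
      eLpNorm ((4 * π * |t|) ^ (-(d / 2 : ℝ)) • fun x => g ((4 * π * t)⁻¹ • x))
        (ENNReal.ofReal r) := by
    refine eLpNorm_congr_enorm_ae (.of_forall fun x => ?_)
    rw [enorm_schrod ht, hg, Pi.smul_apply, enorm_smul, Real.enorm_of_nonneg (by positivity)]
  rw [hnorm, eLpNorm_const_smul, Real.enorm_of_nonneg (by positivity),
    eLpNorm_comp_smul hcont.stronglyMeasurable hscale hr, habs, ← mul_assoc,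
    ← ENNReal.ofReal_mul (by positivity), ← Real.rpow_add hscale_pos, hd]
  congr 3
  rw [decayExponent]
  ring

/-- **Dispersive estimate.** -/
theorem eLpNorm_schrod_le (hd : finrank ℝ E = d) {p r : ℝ} (hpr : p.HolderConjugate r)
    (hr : 2 < r) (ht : t ≠ 0) :
    eLpNorm (schrod d t f) (ENNReal.ofReal r) ≤
      ENNReal.ofReal ((4 * π * |t|) ^ (-decayExponent d r) * marcinkiewiczConst r) *
        eLpNorm f (ENNReal.ofReal p) := by
  by_cases hf : Integrable f
  swap
  · rw [schrod_eq_zero_of_not_integrable ht hf, eLpNorm_zero]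
    exact zero_le
  rw [eLpNorm_schrod_eq hd ht hf hpr.symm.pos, ENNReal.ofReal_mul (by positivity),
    mul_assoc (ENNReal.ofReal _), ← eLpNorm_chirp_mul t f]
  gcongr _ * ?_
  exact eLpNorm_fourier_le (integrable_chirp_mul hf t) hpr hr

theorem measurable_uncurry_schrod {S : Type*} [MeasurableSpace S] {τ : S → ℝ}
    (hτ : Measurable τ) {u : S → E → ℂ} (hu : Measurable (Function.uncurry u)) :
    Measurable (Function.uncurry fun s => schrod d (τ s) (u s)) := by
  have hkernel : Measurable fun w : (S × E) × E => Complex.exp (Complex.I *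
      ((‖w.1.2 - w.2‖ ^ 2 : ℝ) : ℂ) / (4 * ((τ w.1.1 : ℝ) : ℂ))) * u w.1.1 w.2 :=
    .mul (by fun_prop) (hu.comp (by fun_prop : Measurable fun w : (S × E) × E => (w.1.1, w.2)))
  have hite : (Function.uncurry fun s => schrod d (τ s) (u s)) = fun z : S × E =>
      if τ z.1 = 0 then u z.1 z.2 else
        (4 * (π : ℂ) * Complex.I * (τ z.1 : ℂ)) ^ (-(d : ℂ) / 2) *
          ∫ y, Complex.exp (Complex.I * ((‖z.2 - y‖ ^ 2 : ℝ) : ℂ) / (4 * (τ z.1 : ℂ))) *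
            u z.1 y := by
    ext z
    simp only [Function.uncurry, schrod, ite_apply]
  rw [hite]
  exact .ite (measurableSet_eq_fun (by fun_prop) measurable_const) hu <|
    .mul (by fun_prop) hkernel.stronglyMeasurable.integral_prod_right'.measurable

end Propagator

section Duhamel

open Module

variable {E : Type*} [NormedAddCommGroup E] [InnerProductSpace ℝ E] [FiniteDimensional ℝ E]
  [MeasurableSpace E] [BorelSpace E] {d : ℕ} {p r : ℝ}

theorem eLpNorm_integral_schrod_le (hd : finrank ℝ E = d) (hpr : p.HolderConjugate r)
    (hr : 2 < r) {F : ℝ → E → ℂ} (hF : Measurable (Function.uncurry F)) (t : ℝ) (I : Set ℝ) :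
    eLpNorm (fun x => ∫ s in I, schrod d (t - s) (F s) x) (ENNReal.ofReal r) ≤
      ∫⁻ s in I, ENNReal.ofReal ((4 * π * |t - s|) ^ (-decayExponent d r) *
        marcinkiewiczConst r) * eLpNorm (F s) (ENNReal.ofReal p) := by
  refine (eLpNorm_integral_le_lintegral_eLpNorm (by linarith)
    (measurable_uncurry_schrod (by fun_prop) hF)).trans (lintegral_mono_ae ?_)
  filter_upwards [ae_restrict_of_ae (Measure.ae_ne volume t)] with s hs
  exact eLpNorm_schrod_le hd hpr hr (sub_ne_zero.2 hs.symm)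

/-- The constant `C` of the bound `‖∫_I e^{i(t-s)Δ} F(s) ds‖_r ≤ C B^{1-δ} ‖F‖_{L^∞_t L^p_x}` in
`eLpNorm_integral_schrod_le_of_ae_le`, where `δ = decayExponent d r`. -/
def duhamelConst (d : ℕ) (r : ℝ) : ℝ :=
  (4 * π) ^ (-decayExponent d r) * marcinkiewiczConst r / (1 - decayExponent d r)

theorem duhamelConst_pos (hr : 2 < r) (hδ : decayExponent d r < 1) : 0 < duhamelConst d r :=
  div_pos (mul_pos (by positivity) (marcinkiewiczConst_pos hr)) (sub_pos.2 hδ)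

theorem eLpNorm_integral_schrod_le_of_ae_le (hd : finrank ℝ E = d) (hpr : p.HolderConjugate r)
    (hr : 2 < r) (hδ : decayExponent d r < 1) {F : ℝ → E → ℂ}
    (hF : Measurable (Function.uncurry F)) {t B : ℝ} (hB : 0 ≤ B) {I : Set ℝ}
    (hI : I ⊆ Icc (t - B) t) {N : ℝ≥0∞}
    (hN : ∀ᵐ s ∂volume.restrict I, eLpNorm (F s) (ENNReal.ofReal p) ≤ N) :
    eLpNorm (fun x => ∫ s in I, schrod d (t - s) (F s) x) (ENNReal.ofReal r) ≤
      ENNReal.ofReal (duhamelConst d r * B ^ (1 - decayExponent d r)) * N := by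
  have hK := marcinkiewiczConst_pos hr
  have hkernel (s : ℝ) : ENNReal.ofReal ((4 * π * |t - s|) ^ (-decayExponent d r) *
      marcinkiewiczConst r) = ENNReal.ofReal ((4 * π) ^ (-decayExponent d r) *
        marcinkiewiczConst r) * ENNReal.ofReal (|t - s| ^ (-decayExponent d r)) := by
    rw [← ENNReal.ofReal_mul (by positivity),
      Real.mul_rpow (by positivity : 0 ≤ 4 * π) (abs_nonneg _), mul_right_comm]
  have hconst : (4 * π) ^ (-decayExponent d r) * marcinkiewiczConst r *
      (B ^ (-decayExponent d r + 1) / (-decayExponent d r + 1)) =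
        duhamelConst d r * B ^ (1 - decayExponent d r) := by
    rw [duhamelConst, neg_add_eq_sub]
    ring
  refine (eLpNorm_integral_schrod_le hd hpr hr hF t I).trans ?_
  refine (lintegral_mono_ae (hN.mono fun s hs => mul_le_mul_right hs _)).trans ?_
  simp only [hkernel]
  rw [lintegral_mul_const _ (by fun_prop), lintegral_const_mul _ (by fun_prop), ← hconst,
    ENNReal.ofReal_mul (p := (4 * π) ^ (-decayExponent d r) * marcinkiewiczConst r)
      (by positivity)]
  exact mul_le_mul_left (mul_le_mul_right
    (setLIntegral_ofReal_abs_sub_rpow_le (neg_lt_neg hδ) hB hI) _) _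

theorem ae_eLpNorm_nonlin_le {a α β : ℝ} (hr : 2 ≤ r) (hp : 0 < p) (hα : 0 ≤ α) (hβ : 0 ≤ β)
    (hαβ : α + β = a + 1) (hexp : α / 2 + β / r = 1 / p) {δ t₀ : ℝ} (hδ : 0 ≤ δ) (ht₀ : 0 < t₀)
    {I : Set ℝ} (hI : MeasurableSet I) (hIt₀ : I ⊆ Ici t₀) {X : Type*} [MeasurableSpace X]
    {μ : Measure X} {u : ℝ → X → ℂ} (hu : ∀ s, AEMeasurable (u s) μ) :
    ∀ᵐ s ∂volume.restrict I, eLpNorm (nonlin a (u s)) (ENNReal.ofReal p) μ ≤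
      mixedNorm μ I ∞ 2 u ^ α * (ENNReal.ofReal (t₀ ^ (-δ)) *
        ⨆ s ∈ I, ENNReal.ofReal (s ^ δ) * eLpNorm (u s) (ENNReal.ofReal r) μ) ^ β := by
  have hess : ∀ᵐ s ∂volume.restrict I, eLpNorm (u s) 2 μ ≤ mixedNorm μ I ∞ 2 u := by
    rw [mixedNorm, if_pos rfl]
    exact ENNReal.ae_le_essSup _
  filter_upwards [hess, ae_restrict_mem hI] with s hs hsI
  have hnonlin := eLpNorm_nonlin_le (hu s) hp two_pos (by linarith) hα hβ hαβ hexp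
  rw [ENNReal.ofReal_ofNat] at hnonlin
  refine hnonlin.trans (mul_le_mul' (ENNReal.rpow_le_rpow hs hα) (ENNReal.rpow_le_rpow ?_ hβ))
  exact le_ofReal_rpow_neg_mul_iSup hδ ht₀ hsI (hIt₀ hsI) fun s =>
    eLpNorm (u s) (ENNReal.ofReal r) μ

theorem interpolation_case3_3d_general (hd : finrank ℝ E = d) {a α β : ℝ} (hr : 2 < r)
    (hδ : decayExponent d r < 1) (hα : 0 ≤ α) (hβ : 0 ≤ β) (hαβ : α + β = a + 1)
    (hexp : α / 2 + β / r = 1 - 1 / r) :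
    ∃ C : ℝ, 0 < C ∧ ∀ t : ℝ, 0 < t → ∀ B : ℝ, 0 < B → ∀ I : Set ℝ, MeasurableSet I →
      I ⊆ Icc (max (t / 2) (t - B)) t → ∀ u : ℝ → E → ℂ, Measurable (Function.uncurry u) →
        eLpNorm (fun x => ∫ s in I, schrod d (t - s) (nonlin a (u s)) x) (ENNReal.ofReal r) ≤
          ENNReal.ofReal (C * t ^ (-(decayExponent d r * β)) * B ^ (1 - decayExponent d r)) *
            mixedNorm volume I ∞ 2 u ^ α *
            (⨆ s ∈ I, ENNReal.ofReal (s ^ decayExponent d r) *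
              eLpNorm (u s) (ENNReal.ofReal r)) ^ β := by
  have hK := duhamelConst_pos hr hδ
  have hδ0 := decayExponent_nonneg d hr.le
  have hpr : r.conjExponent.HolderConjugate r :=
    (Real.HolderConjugate.conjExponent (by linarith)).symm
  have hexp' : α / 2 + β / r = 1 / r.conjExponent := by
    rw [hexp, one_div, one_div, hpr.symm.one_sub_inv]
  refine ⟨duhamelConst d r * 2 ^ (decayExponent d r * β), by positivity,
    fun t ht B hB I hI hIsub u hu => ?_⟩
  have hIhalf : I ⊆ Ici (t / 2) := fun s hs => (le_max_left _ _).trans (hIsub hs).1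
  have hIB : I ⊆ Icc (t - B) t := hIsub.trans (Icc_subset_Icc_left (le_max_right _ _))
  refine (eLpNorm_integral_schrod_le_of_ae_le hd hpr hr hδ (measurable_uncurry_nonlin hu) hB.le
    hIB (ae_eLpNorm_nonlin_le hr.le hpr.pos hα hβ hαβ hexp' hδ0 (half_pos ht) hI hIhalf
      fun s => hu.of_uncurry_left.aemeasurable)).trans_eq ?_
  have hhalf : (t / 2) ^ (-decayExponent d r * β) =
      2 ^ (decayExponent d r * β) * t ^ (-(decayExponent d r * β)) := by
    rw [neg_mul, Real.div_rpow ht.le two_pos.le, Real.rpow_neg two_pos.le, div_inv_eq_mul, mul_comm]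
  have hconst : duhamelConst d r * 2 ^ (decayExponent d r * β) * t ^ (-(decayExponent d r * β)) *
      B ^ (1 - decayExponent d r) = duhamelConst d r * B ^ (1 - decayExponent d r) *
        (t / 2) ^ (-decayExponent d r * β) := by
    rw [hhalf]
    ring
  rw [hconst, ENNReal.ofReal_mul (q := (t / 2) ^ (-decayExponent d r * β)) (by positivity),
    ENNReal.mul_rpow_of_nonneg _ _ hβ, ENNReal.ofReal_rpow_of_pos (by positivity),
    ← Real.rpow_mul (by positivity)]
  ring

end Duhamel

/-- **Three-dimensional interpolation estimate (Case 3 of the last Duhamel term).**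
Fix `4 ≤ r < 6`.  For any `t > 0`, `B > 0`, any measurable interval
`I ⊆ [max (t/2) (t-B), t]`, and any measurable `u` on `I × ℝ³`,
`‖∫_I e^{i(t-s)Δ}(|u|^{4/3}u)(s) ds‖_{L^r_x} ≤ C t^{-(r+6)/(2r)} B^{(6-r)/(2r)}
  ‖u‖_{L^∞_s L²_x(I×ℝ³)}^{2(3r-10)/(3(r-2))}
  (sup_{s∈I} s^{3(1/2-1/r)} ‖u(s)‖_{L^r_x})^{(r+6)/(3(r-2))}`, with `C = C(r)`. -/
theorem interpolation_case3_3d (r : ℝ) (hr : 4 ≤ r) (hr6 : r < 6) :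
    ∃ C : ℝ, 0 < C ∧
      ∀ t : ℝ, 0 < t → ∀ B : ℝ, 0 < B →
        ∀ I : Set ℝ, MeasurableSet I → I.OrdConnected →
          I ⊆ Set.Icc (max (t / 2) (t - B)) t →
          ∀ u : ℝ → EuclideanSpace ℝ (Fin 3) → ℂ, Measurable (Function.uncurry u) →
            eLpNorm (fun x => ∫ s in I, schrod 3 (t - s) (nonlin (4 / 3) (u s)) x)
                (ENNReal.ofReal r) volume ≤
              ENNReal.ofReal (C * t ^ (-((r + 6) / (2 * r))) * B ^ ((6 - r) / (2 * r))) *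
                mixedNorm volume I ∞ 2 u ^ (2 * (3 * r - 10) / (3 * (r - 2))) *
                (⨆ s ∈ I, ENNReal.ofReal (s ^ (3 * (1 / 2 - 1 / r))) *
                    eLpNorm (u s) (ENNReal.ofReal r) volume) ^ ((r + 6) / (3 * (r - 2))) := by
  have hr2 : 0 < r - 2 := by linarith
  have hδ : decayExponent 3 r = 3 * (1 / 2 - 1 / r) := rfl
  have hα : 0 ≤ 2 * (3 * r - 10) / (3 * (r - 2)) := by
    have : 0 ≤ 3 * r - 10 := by linarith
    positivity
  have hδβ : decayExponent 3 r * ((r + 6) / (3 * (r - 2))) = (r + 6) / (2 * r) := by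
    rw [hδ]
    field_simp
  have hδ' : 1 - decayExponent 3 r = (6 - r) / (2 * r) := by
    rw [hδ]
    field_simp
    ring
  have hδ_lt : decayExponent 3 r < 1 := by
    rw [← sub_pos, hδ']
    exact div_pos (by linarith) (by positivity)
  obtain ⟨C, hC, hbound⟩ := interpolation_case3_3d_general (E := EuclideanSpace ℝ (Fin 3))
    (a := 4 / 3) (β := (r + 6) / (3 * (r - 2))) finrank_euclideanSpace_fin (by linarith) hδ_lt hα
    (by positivity) (by field_simp; ring) (by field_simp; ring)
  rw [hδβ, hδ', hδ] at hbound
  exact ⟨C, hC, fun t ht B hB I hI _ => hbound t ht B hB I hI⟩
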